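/- Fix n ≥ 2. There exists a constant C > 0 (depending only on n) such that the following holds: let X be an n-dimensional real normed vector space with von Neumann–Jordan constant at most ε + 1 (ε ≥ 0), let Λ : ℝⁿ⁻¹ → X (ℝⁿ⁻¹ with the Euclidean norm) be an injective linear map onto a subspace Y of X with ‖Λ‖ ≤ 1 and ‖Λ⁻¹‖ ≤ K (where K ≥ 1), let x₁, …, x_{n−1} ∈ X be the images of the standard basis vectors under Λ, and let x_n ∈ X satisfy ‖x_n‖ = 1 and |[xᵢ, x_n]| ≤ δ for all i < n. Then for all real numbers a₁, …, a_{n−1}: |‖∑_{i<n} aᵢxᵢ + x_n‖²/(‖∑_{i<n} aᵢxᵢ‖² + 1) − 1| ≤ ε + (K²/2)·(√(n−1)·δ + 36(n−1)ε + Cε²). -/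

import Mathlib

/-!
The bracket `[a, b]` is four times the inner product when the parallelogram law is exact. If the
law holds up to a relative error `ε`, then applying it to the pairs `(x ± z, y ± z)` and subtracting
shows that `[·, z]` is midpoint-affine up to an error of order `ε`, hence approximately additive.
Moreover, the homogeneity defect `[a x, z] - a [x, z]` at `a ∈ [-1, 1]` is, up to such an error,
half of the defect at `2 a - 1` or `2 a + 1`, so its supremum is of order `ε` as well; the case
`|a| > 1` follows by exchanging the roles of `x` and `z`. Expanding `[∑ aᵢ xᵢ, z]` and applying the
Cauchy–Schwarz inequality to `∑ aᵢ [xᵢ, z]` gives the estimate.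
-/

open Finset

/-- The von Neumann–Jordan constant of `X` is at most `M`. -/
def VonNeumannJordanLE (X : Type*) [NormedAddCommGroup X] (M : ℝ) : Prop :=
  ∀ a b : X, ¬(a = 0 ∧ b = 0) →
    1 / M ≤ (‖a + b‖ ^ 2 + ‖a - b‖ ^ 2) / (2 * (‖a‖ ^ 2 + ‖b‖ ^ 2)) ∧
      (‖a + b‖ ^ 2 + ‖a - b‖ ^ 2) / (2 * (‖a‖ ^ 2 + ‖b‖ ^ 2)) ≤ M

/-- The bracket `[a, b]`, without the factor `1 / 4` that would make it the inner product in a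
Euclidean space. -/
def normBracket {X : Type*} [SeminormedAddCommGroup X] (a b : X) : ℝ :=
  ‖a + b‖ ^ 2 - ‖a - b‖ ^ 2

theorem norm_le_of_forall_exists_norm_two_smul_sub_le {α E : Type*} [SeminormedAddCommGroup E]
    [NormedSpace ℝ E] {f : α → E} {e : ℝ} (hf : BddAbove (Set.range fun a => ‖f a‖))
    (h : ∀ a, ∃ b, ‖(2 : ℝ) • f a - f b‖ ≤ e) (a : α) : ‖f a‖ ≤ e := by
  have : Nonempty α := ⟨a⟩
  have sup_le : ⨆ a, ‖f a‖ ≤ ((⨆ a, ‖f a‖) + e) / 2 := by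
    refine ciSup_le fun a => ?_
    obtain ⟨b, hb⟩ := h a
    have norm_two_smul : ‖(2 : ℝ) • f a‖ = 2 * ‖f a‖ := by simp [norm_smul]
    linarith [norm_sub_norm_le ((2 : ℝ) • f a) (f b), le_ciSup hf b]
  linarith [le_ciSup hf a]

theorem sum_abs_le_sqrt_card_mul_sqrt_sum_sq {ι : Type*} (s : Finset ι) (a : ι → ℝ) :
    ∑ i ∈ s, |a i| ≤ √(#s) * √(∑ i ∈ s, a i ^ 2) := by
  rw [← Real.sqrt_mul (Nat.cast_nonneg _)]
  refine Real.le_sqrt_of_sq_le ?_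
  simpa only [sq_abs] using sq_sum_le_card_mul_sum_sq (s := s) (f := fun i => |a i|)

theorem norm_sq_sum_smul_of_orthonormal {𝕜 E ι : Type*} [RCLike 𝕜] [SeminormedAddCommGroup E]
    [InnerProductSpace 𝕜 E] {e : ι → E} (he : Orthonormal 𝕜 e) (s : Finset ι) (a : ι → 𝕜) :
    ‖∑ i ∈ s, a i • e i‖ ^ 2 = ∑ i ∈ s, ‖a i‖ ^ 2 := by
  rw [← RCLike.ofReal_inj (K := 𝕜), RCLike.ofReal_pow, ← inner_self_eq_norm_sq_to_K, he.inner_sum]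
  simp [RCLike.conj_mul]

section Bracket

variable {X : Type*} [SeminormedAddCommGroup X]

theorem normBracket_comm (a b : X) : normBracket a b = normBracket b a := by
  rw [normBracket, normBracket, add_comm, norm_sub_rev]

@[simp]
theorem normBracket_zero_left (b : X) : normBracket 0 b = 0 := by
  simp [normBracket]

@[simp]
theorem normBracket_neg_left (a b : X) : normBracket (-a) b = -normBracket a b := by
  rw [normBracket, normBracket, neg_add_eq_sub, norm_sub_rev b, ← neg_add', norm_neg, neg_sub]

theorem normBracket_smul_smul [NormedSpace ℝ X] (t : ℝ) (a b : X) :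
    normBracket (t • a) (t • b) = t ^ 2 * normBracket a b := by
  simp only [normBracket, ← smul_add, ← smul_sub, norm_smul, mul_pow, Real.norm_eq_abs, sq_abs,
    mul_sub]

end Bracket

namespace VonNeumannJordanLE

variable {X : Type*} [NormedAddCommGroup X] {ε : ℝ}

theorem abs_parallelogram_sub_le (h : VonNeumannJordanLE X (ε + 1)) (hε : 0 ≤ ε) (a b : X) :
    |‖a + b‖ ^ 2 + ‖a - b‖ ^ 2 - 2 * (‖a‖ ^ 2 + ‖b‖ ^ 2)| ≤ 2 * ε * (‖a‖ ^ 2 + ‖b‖ ^ 2) := by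
  by_cases hab : a = 0 ∧ b = 0
  · simp [hab.1, hab.2]
  have norm_pos : 0 < 2 * (‖a‖ ^ 2 + ‖b‖ ^ 2) := by
    rcases not_and_or.1 hab with ha | hb <;> positivity
  have one_sub_le : 1 - ε ≤ 1 / (ε + 1) := by
    rw [le_div_iff₀ (by positivity)]
    nlinarith
  obtain ⟨lower, upper⟩ := h a b hab
  have lower' := (le_div_iff₀ norm_pos).1 (one_sub_le.trans lower)
  have upper' := (div_le_iff₀ norm_pos).1 upper
  rw [abs_le]
  constructor <;> linarith

theorem abs_norm_add_sq_sub_le (h : VonNeumannJordanLE X (ε + 1)) (hε : 0 ≤ ε) (a b : X) :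
    |‖a + b‖ ^ 2 - (‖a‖ ^ 2 + ‖b‖ ^ 2)| ≤
      ε * (‖a‖ ^ 2 + ‖b‖ ^ 2) + |normBracket a b| / 2 := by
  have decomposition : ‖a + b‖ ^ 2 - (‖a‖ ^ 2 + ‖b‖ ^ 2) =
      (‖a + b‖ ^ 2 + ‖a - b‖ ^ 2 - 2 * (‖a‖ ^ 2 + ‖b‖ ^ 2)) / 2 + normBracket a b / 2 := by
    rw [normBracket]
    ring
  rw [decomposition]
  refine (abs_add_le _ _).trans ?_
  rw [abs_div, abs_div, abs_two]
  linarith [h.abs_parallelogram_sub_le hε a b]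

variable [NormedSpace ℝ X]

theorem abs_two_mul_normBracket_sub_le (h : VonNeumannJordanLE X (ε + 1)) (hε : 0 ≤ ε)
    {w x y : X} (hw : (2 : ℝ) • w = x + y) (z : X) :
    |2 * normBracket w z - normBracket x z - normBracket y z| ≤
      2 * ε * (1 + ε) * (‖x‖ ^ 2 + ‖y‖ ^ 2 + 2 * ‖z‖ ^ 2) := by
  have law : ∀ u : X, |4 * ‖w + u‖ ^ 2 + ‖x - y‖ ^ 2 - 2 * (‖x + u‖ ^ 2 + ‖y + u‖ ^ 2)| ≤
      2 * ε * (‖x + u‖ ^ 2 + ‖y + u‖ ^ 2) := fun u => by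
    have sum_eq : x + u + (y + u) = (2 : ℝ) • (w + u) := by
      rw [smul_add, hw, two_smul]
      abel
    have norm_sum : ‖x + u + (y + u)‖ ^ 2 = 4 * ‖w + u‖ ^ 2 := by
      rw [sum_eq, norm_smul, Real.norm_two]
      ring
    simpa only [norm_sum, add_sub_add_right_eq_sub] using
      h.abs_parallelogram_sub_le hε (x + u) (y + u)
  have law_add := law z
  have law_sub := law (-z)
  simp only [← sub_eq_add_neg] at law_sub
  have norm_sum_le : ‖x + z‖ ^ 2 + ‖x - z‖ ^ 2 + (‖y + z‖ ^ 2 + ‖y - z‖ ^ 2) ≤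
      2 * (1 + ε) * (‖x‖ ^ 2 + ‖y‖ ^ 2 + 2 * ‖z‖ ^ 2) := by
    linarith [(abs_le.1 (h.abs_parallelogram_sub_le hε x z)).2,
      (abs_le.1 (h.abs_parallelogram_sub_le hε y z)).2]
  have scaled := mul_le_mul_of_nonneg_left norm_sum_le hε
  simp only [normBracket]
  rw [abs_le] at *
  constructor <;> linarith

theorem abs_normBracket_add_sub_le (h : VonNeumannJordanLE X (ε + 1)) (hε : 0 ≤ ε) (x y z : X) :
    |normBracket (x + y) z - (normBracket x z + normBracket y z)| ≤
      2 * ε * (1 + ε) * (‖x‖ ^ 2 + ‖y‖ ^ 2 + ‖x + y‖ ^ 2 + 4 * ‖z‖ ^ 2) := by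
  have two_smul_midpoint : (2 : ℝ) • (2⁻¹ : ℝ) • (x + y) = x + y := smul_inv_smul₀ two_ne_zero _
  have midpoint_x_y := h.abs_two_mul_normBracket_sub_le hε two_smul_midpoint z
  have midpoint_sum_zero :=
    h.abs_two_mul_normBracket_sub_le hε (two_smul_midpoint.trans (add_zero (x + y)).symm) z
  rw [normBracket_zero_left, norm_zero] at midpoint_sum_zero
  rw [abs_le] at *
  constructor <;> linarith

theorem abs_normBracket_sum_sub_le (h : VonNeumannJordanLE X (ε + 1)) (hε : 0 ≤ ε) {ι : Type*}
    {v : ι → X} {s : Finset ι} {R : ℝ} (hR : ∀ t ⊆ s, ‖∑ i ∈ t, v i‖ ^ 2 ≤ R) (z : X) :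
    |normBracket (∑ i ∈ s, v i) z - ∑ i ∈ s, normBracket (v i) z| ≤
      #s * (2 * ε * (1 + ε) * (3 * R + 4 * ‖z‖ ^ 2)) := by
  classical
  induction s using Finset.induction_on with
  | empty => simp
  | insert j s hj ih =>
    have norm_head : ‖v j‖ ^ 2 ≤ R := by simpa using hR {j} (by simp)
    have norm_tail : ‖∑ i ∈ s, v i‖ ^ 2 ≤ R := hR s (subset_insert j s)
    have norm_total : ‖v j + ∑ i ∈ s, v i‖ ^ 2 ≤ R := by
      simpa only [sum_insert hj] using hR (insert j s) subset_rfl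
    have defect_tail := ih fun t ht => hR t (ht.trans (subset_insert j s))
    have defect_head : |normBracket (v j + ∑ i ∈ s, v i) z -
        (normBracket (v j) z + normBracket (∑ i ∈ s, v i) z)| ≤
          2 * ε * (1 + ε) * (3 * R + 4 * ‖z‖ ^ 2) := by
      refine (h.abs_normBracket_add_sub_le hε _ _ z).trans ?_
      gcongr
      linarith
    rw [sum_insert hj, sum_insert hj, card_insert_of_notMem hj]
    push_cast
    rw [abs_le] at *
    constructor <;> linarith

theorem abs_normBracket_smul_sub_le_of_abs_le_one (h : VonNeumannJordanLE X (ε + 1)) (hε : 0 ≤ ε)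
    (x z : X) {a : ℝ} (ha : |a| ≤ 1) :
    |normBracket (a • x) z - a * normBracket x z| ≤
      4 * ε * (1 + ε) * (‖x‖ ^ 2 + ‖z‖ ^ 2) := by
  let defect : Set.Icc (-1 : ℝ) 1 → ℝ := fun a => normBracket ((a : ℝ) • x) z - a * normBracket x z
  have defect_bddAbove : BddAbove (Set.range fun a => ‖defect a‖) := by
    refine (isCompact_range ?_).bddAbove
    simp only [defect, normBracket]
    fun_prop
  have defect_doubling : ∀ a, ∃ b,
      ‖(2 : ℝ) • defect a - defect b‖ ≤ 4 * ε * (1 + ε) * (‖x‖ ^ 2 + ‖z‖ ^ 2) := by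
    rintro ⟨a, ha⟩
    obtain ⟨σ, σ_bracket, σ_norm, hb⟩ : ∃ σ : ℝ, normBracket (σ • x) z = σ * normBracket x z ∧
        ‖σ • x‖ = ‖x‖ ∧ 2 * a - σ ∈ Set.Icc (-1 : ℝ) 1 := by
      rcases le_total 0 a with ha0 | ha0
      · exact ⟨1, by simp, by simp, by linarith, by linarith [ha.2]⟩
      · exact ⟨-1, by simp, by simp, by linarith [ha.1], by linarith⟩
    have norm_le : ‖(2 * a - σ) • x‖ ≤ ‖x‖ := by
      rw [norm_smul]
      exact mul_le_of_le_one_left (norm_nonneg x) (abs_le.2 hb)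
    have midpoint : (2 : ℝ) • a • x = (2 * a - σ) • x + σ • x := by module
    refine ⟨⟨2 * a - σ, hb⟩, ?_⟩
    calc ‖(2 : ℝ) • defect ⟨a, ha⟩ - defect ⟨2 * a - σ, hb⟩‖
        = |2 * normBracket (a • x) z - normBracket ((2 * a - σ) • x) z
            - normBracket (σ • x) z| := by
          rw [Real.norm_eq_abs, σ_bracket, smul_eq_mul]
          congr 1
          ring
      _ ≤ 2 * ε * (1 + ε) * (‖(2 * a - σ) • x‖ ^ 2 + ‖σ • x‖ ^ 2 + 2 * ‖z‖ ^ 2) :=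
          h.abs_two_mul_normBracket_sub_le hε midpoint z
      _ ≤ 2 * ε * (1 + ε) * (‖x‖ ^ 2 + ‖x‖ ^ 2 + 2 * ‖z‖ ^ 2) := by
          rw [σ_norm]
          gcongr
      _ = 4 * ε * (1 + ε) * (‖x‖ ^ 2 + ‖z‖ ^ 2) := by ring
  exact norm_le_of_forall_exists_norm_two_smul_sub_le defect_bddAbove defect_doubling
    ⟨a, abs_le.1 ha⟩

theorem abs_normBracket_smul_sub_le (h : VonNeumannJordanLE X (ε + 1)) (hε : 0 ≤ ε) (x z : X)
    (a : ℝ) :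
    |normBracket (a • x) z - a * normBracket x z| ≤
      4 * ε * (1 + ε) * (‖x‖ ^ 2 + ‖z‖ ^ 2) * (1 + a ^ 2) := by
  have bound_nonneg : 0 ≤ 4 * ε * (1 + ε) * (‖x‖ ^ 2 + ‖z‖ ^ 2) := by positivity
  rcases le_or_gt |a| 1 with ha | ha
  · exact (h.abs_normBracket_smul_sub_le_of_abs_le_one hε x z ha).trans
      (le_mul_of_one_le_right bound_nonneg (by linarith [sq_nonneg a]))
  · have ha0 : a ≠ 0 := by
      rintro rfl
      norm_num at ha
    have exchange : normBracket (a • x) z - a * normBracket x z =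
        a ^ 2 * (normBracket (a⁻¹ • z) x - a⁻¹ * normBracket z x) := by
      have := normBracket_smul_smul a x (a⁻¹ • z)
      rw [smul_inv_smul₀ ha0] at this
      rw [this, normBracket_comm _ x, normBracket_comm z x]
      field_simp
    have abs_inv_le : |a⁻¹| ≤ 1 := by
      rw [abs_inv]
      exact inv_le_one_of_one_le₀ ha.le
    calc |normBracket (a • x) z - a * normBracket x z|
        = a ^ 2 * |normBracket (a⁻¹ • z) x - a⁻¹ * normBracket z x| := by
          rw [exchange, abs_mul, abs_sq]
      _ ≤ a ^ 2 * (4 * ε * (1 + ε) * (‖z‖ ^ 2 + ‖x‖ ^ 2)) := by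
          gcongr
          exact h.abs_normBracket_smul_sub_le_of_abs_le_one hε z x abs_inv_le
      _ ≤ 4 * ε * (1 + ε) * (‖x‖ ^ 2 + ‖z‖ ^ 2) * (1 + a ^ 2) := by linarith

theorem abs_sum_normBracket_smul_le (h : VonNeumannJordanLE X (ε + 1)) (hε : 0 ≤ ε) {ι : Type*}
    {s : Finset ι} {x : ι → X} {z : X} {δ : ℝ} (hx : ∀ i ∈ s, ‖x i‖ ≤ 1) (hz : ‖z‖ ≤ 1)
    (hδ : ∀ i ∈ s, |normBracket (x i) z| ≤ δ) (a : ι → ℝ) :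
    |∑ i ∈ s, normBracket (a i • x i) z| ≤
      (∑ i ∈ s, |a i|) * δ + 8 * ε * (1 + ε) * (#s + ∑ i ∈ s, a i ^ 2) := by
  have term_le : ∀ i ∈ s, |normBracket (a i • x i) z| ≤
      |a i| * δ + 8 * ε * (1 + ε) * (1 + a i ^ 2) := by
    intro i hi
    have linear_part : |a i * normBracket (x i) z| ≤ |a i| * δ := by
      rw [abs_mul]
      exact mul_le_mul_of_nonneg_left (hδ i hi) (abs_nonneg _)
    have homogeneity_defect : |normBracket (a i • x i) z - a i * normBracket (x i) z| ≤
        8 * ε * (1 + ε) * (1 + a i ^ 2) :=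
      calc _ ≤ 4 * ε * (1 + ε) * (‖x i‖ ^ 2 + ‖z‖ ^ 2) * (1 + a i ^ 2) :=
            h.abs_normBracket_smul_sub_le hε (x i) z (a i)
        _ ≤ 4 * ε * (1 + ε) * (1 ^ 2 + 1 ^ 2) * (1 + a i ^ 2) := by
            gcongr
            exact hx i hi
        _ = _ := by ring
    linarith [abs_sub_abs_le_abs_sub (normBracket (a i • x i) z) (a i * normBracket (x i) z)]
  calc |∑ i ∈ s, normBracket (a i • x i) z|
      ≤ ∑ i ∈ s, (|a i| * δ + 8 * ε * (1 + ε) * (1 + a i ^ 2)) :=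
        (abs_sum_le_sum_abs _ _).trans (sum_le_sum term_le)
    _ = _ := by
        simp only [sum_add_distrib, ← sum_mul, ← mul_sum, sum_const, nsmul_one]

theorem abs_normBracket_sum_smul_le (h : VonNeumannJordanLE X (ε + 1)) (hε : 0 ≤ ε) {ι : Type*}
    {s : Finset ι} (hs : s.Nonempty) {x : ι → X} {z : X} {δ : ℝ}
    (hx : ∀ (c : ι → ℝ), ∀ t ⊆ s, ‖∑ i ∈ t, c i • x i‖ ^ 2 ≤ ∑ i ∈ t, c i ^ 2) (hz : ‖z‖ ≤ 1)
    (hδ : ∀ i ∈ s, |normBracket (x i) z| ≤ δ) (a : ι → ℝ) :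
    |normBracket (∑ i ∈ s, a i • x i) z| ≤
      (√(#s) * δ + 16 * #s * ε * (1 + ε)) * (1 + ∑ i ∈ s, a i ^ 2) := by
  obtain ⟨j, hj⟩ := hs
  have δ_nonneg : 0 ≤ δ := (abs_nonneg _).trans (hδ j hj)
  have one_le_card : (1 : ℝ) ≤ #s := by exact_mod_cast card_pos.2 ⟨j, hj⟩
  have norm_le_one : ∀ i ∈ s, ‖x i‖ ≤ 1 := fun i hi => by
    simpa using hx 1 {i} (singleton_subset_iff.2 hi)
  set R := ∑ i ∈ s, a i ^ 2
  have R_nonneg : 0 ≤ R := sum_nonneg fun i _ => sq_nonneg (a i)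
  have additivity_defect : |normBracket (∑ i ∈ s, a i • x i) z
      - ∑ i ∈ s, normBracket (a i • x i) z| ≤ #s * (2 * ε * (1 + ε) * (3 * R + 4)) := by
    have partial_sum_le : ∀ t ⊆ s, ‖∑ i ∈ t, a i • x i‖ ^ 2 ≤ R := fun t ht =>
      (hx a t ht).trans (sum_le_sum_of_subset_of_nonneg ht fun i _ _ => sq_nonneg (a i))
    refine (h.abs_normBracket_sum_sub_le hε partial_sum_le z).trans ?_
    gcongr
    nlinarith [norm_nonneg z]
  have sum_abs_le : (∑ i ∈ s, |a i|) * δ ≤ √(#s) * δ * (1 + R) := by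
    have sqrt_le : √R ≤ 1 + R := by
      rw [Real.sqrt_le_left (by positivity)]
      nlinarith
    calc (∑ i ∈ s, |a i|) * δ ≤ √(#s) * √R * δ := by
          gcongr
          exact sum_abs_le_sqrt_card_mul_sqrt_sum_sq s a
      _ ≤ √(#s) * (1 + R) * δ := by gcongr
      _ = √(#s) * δ * (1 + R) := by ring
  have total_defect : #s * (2 * ε * (1 + ε) * (3 * R + 4)) + 8 * ε * (1 + ε) * (#s + R) ≤
      16 * #s * ε * (1 + ε) * (1 + R) := by
    have card_mul_le : 8 * R ≤ #s * (10 * R) := by nlinarith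
    calc _ = ε * (1 + ε) * (#s * (6 * R + 16) + 8 * R) := by ring
      _ ≤ ε * (1 + ε) * (#s * (6 * R + 16) + #s * (10 * R)) := by gcongr
      _ = _ := by ring
  linarith [h.abs_sum_normBracket_smul_le hε norm_le_one hz hδ a,
    abs_sub_abs_le_abs_sub (normBracket (∑ i ∈ s, a i • x i) z)
      (∑ i ∈ s, normBracket (a i • x i) z)]

end VonNeumannJordanLE

theorem induct_step_general {X : Type*} [NormedAddCommGroup X] [NormedSpace ℝ X] {ι : Type*}
    [Fintype ι] [Nonempty ι] [DecidableEq ι] {ε K δ : ℝ} (hε : 0 ≤ ε)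
    (hX : VonNeumannJordanLE X (ε + 1)) (hK : 1 ≤ K) {Λ : EuclideanSpace ℝ ι →L[ℝ] X}
    (hΛ : ‖Λ‖ ≤ 1) (hΛK : ∀ v, ‖v‖ ≤ K * ‖Λ v‖) {z : X} (hz : ‖z‖ = 1)
    (hδ : ∀ i, |normBracket (Λ (EuclideanSpace.single i 1)) z| ≤ δ) (a : ι → ℝ) :
    |‖∑ i, a i • Λ (EuclideanSpace.single i 1) + z‖ ^ 2 /
        (‖∑ i, a i • Λ (EuclideanSpace.single i 1)‖ ^ 2 + 1) - 1| ≤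
      ε + K ^ 2 / 2 *
        (√(Fintype.card ι) * δ + 16 * Fintype.card ι * ε + 16 * Fintype.card ι * ε ^ 2) := by
  have norm_sq_sum_single : ∀ (c : ι → ℝ) (t : Finset ι),
      ‖∑ i ∈ t, c i • EuclideanSpace.single i (1 : ℝ)‖ ^ 2 = ∑ i ∈ t, c i ^ 2 := fun c t => by
    simpa using norm_sq_sum_smul_of_orthonormal EuclideanSpace.orthonormal_single t c
  have map_sum_single : ∀ (c : ι → ℝ) (t : Finset ι), ∑ i ∈ t, c i • Λ (EuclideanSpace.single i 1) =
      Λ (∑ i ∈ t, c i • EuclideanSpace.single i 1) := by simp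
  have upper_frame : ∀ (c : ι → ℝ), ∀ t ⊆ univ,
      ‖∑ i ∈ t, c i • Λ (EuclideanSpace.single i 1)‖ ^ 2 ≤ ∑ i ∈ t, c i ^ 2 := fun c t _ => by
    rw [map_sum_single, ← norm_sq_sum_single]
    gcongr
    exact (Λ.le_of_opNorm_le hΛ _).trans_eq (one_mul _)
  set y := ∑ i, a i • Λ (EuclideanSpace.single i 1) with hy
  have lower_frame : 1 + ∑ i, a i ^ 2 ≤ K ^ 2 * (‖y‖ ^ 2 + 1) := by
    have : ∑ i, a i ^ 2 ≤ (K * ‖y‖) ^ 2 := by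
      rw [hy, map_sum_single, ← norm_sq_sum_single]
      exact pow_le_pow_left₀ (norm_nonneg _) (hΛK _) 2
    nlinarith
  have δ_nonneg : 0 ≤ δ := (abs_nonneg _).trans (hδ (Classical.arbitrary ι))
  have bracket_le : |normBracket y z| ≤
      (√(Fintype.card ι) * δ + 16 * Fintype.card ι * ε * (1 + ε)) * (K ^ 2 * (‖y‖ ^ 2 + 1)) :=
    (hX.abs_normBracket_sum_smul_le hε univ_nonempty upper_frame hz.le (fun i _ => hδ i) a).trans
      (mul_le_mul_of_nonneg_left lower_frame (by rw [card_univ]; positivity))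
  have norm_add_sq := hX.abs_norm_add_sq_sub_le hε y z
  rw [hz, one_pow] at norm_add_sq
  have denom_pos : 0 < ‖y‖ ^ 2 + 1 := by positivity
  rw [div_sub_one denom_pos.ne', abs_div, abs_of_pos denom_pos, div_le_iff₀ denom_pos]
  linarith

/-- **Inductive step** (Lemma 3.2). For each `n ≥ 2` there is a constant `C > 0` such
that: if `X` is an `n`-dimensional real normed vector space with von Neumann–Jordan
constant at most `ε + 1`, `Λ : ℝⁿ⁻¹ → X` is an injective linear map with `‖Λ‖ ≤ 1` whose
inverse (on its image) has norm at most `K` (`K ≥ 1`), `x₁, …, x_{n−1}` are the images of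
the standard basis vectors, and `x_n` satisfies `‖x_n‖ = 1` and `|[xᵢ, x_n]| ≤ δ` for all
`i < n`, then for all `a₁, …, a_{n−1} ∈ ℝ`,
`|‖∑ aᵢxᵢ + x_n‖²/(‖∑ aᵢxᵢ‖² + 1) − 1| ≤ ε + (K²/2)(√(n−1)·δ + 36(n−1)ε + Cε²)`,
where `[a, b] = ‖a+b‖² − ‖a−b‖²`. -/
theorem induct_step (n : ℕ) (hn : 2 ≤ n) :
    ∃ C : ℝ, 0 < C ∧
      ∀ (X : Type) (_ : NormedAddCommGroup X) (_ : NormedSpace ℝ X),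
        Module.finrank ℝ X = n →
        ∀ (ε : ℝ), 0 ≤ ε →
        (∀ a b : X, ¬(a = 0 ∧ b = 0) →
          1 / (ε + 1) ≤ (‖a + b‖ ^ 2 + ‖a - b‖ ^ 2) / (2 * (‖a‖ ^ 2 + ‖b‖ ^ 2)) ∧
          (‖a + b‖ ^ 2 + ‖a - b‖ ^ 2) / (2 * (‖a‖ ^ 2 + ‖b‖ ^ 2)) ≤ ε + 1) →
        ∀ (K δ : ℝ), 1 ≤ K →
        ∀ Λ : EuclideanSpace ℝ (Fin (n - 1)) →L[ℝ] X,
          Function.Injective Λ → ‖Λ‖ ≤ 1 →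
          (∀ v : EuclideanSpace ℝ (Fin (n - 1)), ‖v‖ ≤ K * ‖Λ v‖) →
        ∀ x : Fin (n - 1) → X, (∀ i, x i = Λ (EuclideanSpace.single i 1)) →
        ∀ xn : X, ‖xn‖ = 1 →
          (∀ i, |‖x i + xn‖ ^ 2 - ‖x i - xn‖ ^ 2| ≤ δ) →
        ∀ a : Fin (n - 1) → ℝ,
          |‖(∑ i, a i • x i) + xn‖ ^ 2 / (‖∑ i, a i • x i‖ ^ 2 + 1) - 1| ≤
            ε + K ^ 2 / 2 *
              (Real.sqrt ((n : ℝ) - 1) * δ + 36 * ((n : ℝ) - 1) * ε + C * ε ^ 2) := by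
  have pred_pos : 0 < n - 1 := by omega
  have : Nonempty (Fin (n - 1)) := ⟨⟨0, pred_pos⟩⟩
  rw [← Nat.cast_pred (by omega : 0 < n)]
  refine ⟨16 * (n - 1 : ℕ), by positivity, ?_⟩
  intro X _ _ _ ε hε hX K δ hK Λ _ hΛ hΛK x hx xn hxn hδ a
  obtain rfl : x = fun i => Λ (EuclideanSpace.single i 1) := funext hx
  refine (induct_step_general hε hX hK hΛ hΛK hxn hδ a).trans ?_
  rw [Fintype.card_fin]
  gcongr
  norm_num
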